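/- If R is a von Neumann regular ring and the free right R-module R^(ℕ) is a C2 module, then R satisfies the descending chain condition on principal left ideals, hence R is right perfect, and therefore R is semisimple. -/

import Mathlib

def IsSummand {R M : Type*} [Ring R] [AddCommGroup M] [Module R M]
    (p : Submodule R M) : Prop :=
  ∃ q : Submodule R M, IsCompl p q

/-- Partial products `aₙ ⋯ a₂a₁` of a sequence, giving the chain
`Ra₁ ⊇ Ra₂a₁ ⊇ ⋯` of principal left ideals. -/
def chainProd {R : Type*} [Ring R] (a : ℕ → R) : ℕ → R
  | 0 => a 0
  | n + 1 => a (n + 1) * chainProd a n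

/-- The endomorphism `eₙ ↦ eₙ - eₙ₊₁ aₙ` of the free right module `R^(ℕ)`. -/
noncomputable def bassMap {R : Type*} [Ring R] (a : ℕ → R) :
    (ℕ →₀ R) →ₗ[Rᵐᵒᵖ] (ℕ →₀ R) :=
  Finsupp.lsum ℕ fun n =>
    Finsupp.lsingle n - (Finsupp.lsingle (n + 1)).comp (DistribSMul.toLinearMap Rᵐᵒᵖ R (a n))

theorem bassMap_single {R : Type*} [Ring R] (a : ℕ → R) (n : ℕ) (x : R) :
    bassMap a (Finsupp.single n x) = Finsupp.single n x - Finsupp.single (n + 1) (a n * x) := by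
  simp [bassMap]

theorem bassMap_apply_zero {R : Type*} [Ring R] (a : ℕ → R) (x : ℕ →₀ R) :
    bassMap a x 0 = x 0 := by
  induction x using Finsupp.induction_linear with
  | zero => simp
  | add x y hx hy => simp [hx, hy]
  | single n r => simp [bassMap_single]

theorem bassMap_apply_succ {R : Type*} [Ring R] (a : ℕ → R) (x : ℕ →₀ R) (n : ℕ) :
    bassMap a x (n + 1) = x (n + 1) - a n * x n := by
  induction x using Finsupp.induction_linear with
  | zero => simp
  | add x y hx hy => simp only [map_add, Finsupp.add_apply, hx, hy, mul_add]; abel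
  | single m r =>
    by_cases h : m = n
    · subst h; simp [bassMap_single]
    · simp [bassMap_single, h]

theorem bassMap_injective {R : Type*} [Ring R] (a : ℕ → R) :
    Function.Injective (bassMap a) := by
  rw [injective_iff_map_eq_zero]
  intro x hx
  ext n
  induction n with
  | zero => rw [← bassMap_apply_zero a, hx]
  | succ n ih =>
    have h := bassMap_apply_succ a x n
    rw [hx, ih] at h
    simpa using h.symm

theorem exists_leftInverse_of_isSummand_range {R M N : Type*} [Ring R] [AddCommGroup M]
    [Module R M] [AddCommGroup N] [Module R N] (f : M →ₗ[R] N) (hf : Function.Injective f)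
    (h : IsSummand (LinearMap.range f)) : ∃ r : N →ₗ[R] M, ∀ x, r (f x) = x := by
  obtain ⟨q, hq⟩ := h
  refine ⟨(LinearEquiv.ofInjective f hf).symm.toLinearMap ∘ₗ
    Submodule.projectionOnto _ q hq, fun x => ?_⟩
  have := Submodule.projectionOnto_apply_left hq (LinearEquiv.ofInjective f hf x)
  rw [LinearEquiv.ofInjective_apply] at this
  simp [this]

/-- A left inverse of `bassMap` forces the chain of partial products to stabilize. -/
theorem exists_chainProd_mem_span_succ {R : Type*} [Ring R] (a : ℕ → R)
    (r : (ℕ →₀ R) →ₗ[Rᵐᵒᵖ] (ℕ →₀ R)) (hr : ∀ x, r (bassMap a x) = x) :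
    ∃ n : ℕ, ∀ m : ℕ, n ≤ m → chainProd a m ∈ Submodule.span R {chainProd a (m + 1)} := by
  have hstep (n : ℕ) (x : R) :
      r (Finsupp.single n x) = Finsupp.single n x + r (Finsupp.single (n + 1) (a n * x)) := by
    have h := hr (Finsupp.single n x)
    rwa [bassMap_single, map_sub, sub_eq_iff_eq_add] at h
  have hcoord (n k : ℕ) (hk : n < k) :
      r (Finsupp.single 0 1) k = r (Finsupp.single (n + 1) (chainProd a n)) k := by
    induction n with
    | zero =>
      rw [hstep 0 1]
      simp [chainProd, hk.ne]
    | succ n ih =>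
      rw [ih (by omega), hstep (n + 1)]
      simp [chainProd, hk.ne]
  have hlin (n k : ℕ) (x : R) :
      r (Finsupp.single n x) k = r (Finsupp.single n 1) k * x := by
    have h := r.map_smul (MulOpposite.op x) (Finsupp.single n 1)
    rw [Finsupp.smul_single, op_smul_eq_mul, one_mul] at h
    rw [h, Finsupp.smul_apply, op_smul_eq_mul]
  obtain ⟨N, hN⟩ := (r (Finsupp.single 0 1)).support.bddAbove
  refine ⟨N, fun m hm => ?_⟩
  have h0 : r (Finsupp.single 0 1) (m + 1) = 0 := by
    by_contra h
    have := hN (Finsupp.mem_support_iff.mpr h)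
    omega
  rw [hcoord m (m + 1) m.lt_succ_self, hstep, Finsupp.add_apply, Finsupp.single_eq_same,
    hlin] at h0
  rw [Submodule.mem_span_singleton]
  refine ⟨-r (Finsupp.single (m + 1 + 1) 1) (m + 1), ?_⟩
  rw [smul_eq_mul, neg_mul]
  exact (eq_neg_of_add_eq_zero_left h0).symm

theorem span_chainProd_eq_of_le {R : Type*} [Ring R] (a : ℕ → R) (n : ℕ)
    (h : ∀ m : ℕ, n ≤ m → chainProd a m ∈ Submodule.span R {chainProd a (m + 1)})
    (m : ℕ) (hm : n ≤ m) :
    Submodule.span R {chainProd a m} = Submodule.span R {chainProd a n} := by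
  induction m, hm using Nat.le_induction with
  | base => rfl
  | succ m hm ih =>
    rw [← ih]
    refine le_antisymm ?_ ((Submodule.span_singleton_le_iff_mem _ _).mpr (h m hm))
    rw [Submodule.span_singleton_le_iff_mem, Submodule.mem_span_singleton]
    exact ⟨a (m + 1), rfl⟩

/-- In a regular ring, an idempotent of a left ideal which does not generate it can be
enlarged inside the ideal. -/
theorem exists_larger_idempotent {R : Type*} [Ring R] (hreg : ∀ a : R, ∃ b : R, a = a * b * a)
    (I : Submodule R R) {e : R} (he : e ∈ I) (hee : e * e = e) {x : R} (hx : x ∈ I)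
    (hxe : x * e ≠ x) :
    ∃ e' ∈ I, e' * e' = e' ∧ e' * e = e ∧ 1 - e ∉ Submodule.span R {1 - e'} := by
  obtain ⟨y, hy⟩ : ∃ y, y = x - x * e := ⟨_, rfl⟩
  have hyI : y ∈ I := hy ▸ I.sub_mem hx (I.smul_mem x he)
  have hy0 : y ≠ 0 := fun h => hxe (sub_eq_zero.mp (hy ▸ h)).symm
  have hye : y * e = 0 := by rw [hy, sub_mul, mul_assoc, hee, sub_self]
  obtain ⟨b, hb⟩ := hreg y
  obtain ⟨g, hg⟩ : ∃ g, g = (1 - e) * b * y := ⟨_, rfl⟩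
  have hgI : g ∈ I := hg ▸ I.smul_mem ((1 - e) * b) hyI
  have hyg : y * g = y := by
    rw [hg, ← mul_assoc, ← mul_assoc, mul_sub, hye, mul_one, sub_zero, ← hb]
  have hgg : g * g = g := by
    nth_rw 1 [hg]
    rw [mul_assoc, hyg, ← hg]
  have heg : e * g = 0 := by
    rw [hg, ← mul_assoc, ← mul_assoc, mul_sub, hee, mul_one, sub_self, zero_mul, zero_mul]
  have hge : g * e = 0 := by rw [hg, mul_assoc, hye, mul_zero]
  refine ⟨e + g, I.add_mem he hgI, ?_, ?_, fun h => hy0 ?_⟩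
  · rw [add_mul, mul_add, mul_add, hee, heg, hge, hgg, add_zero, zero_add]
  · rw [add_mul, hee, hge, add_zero]
  · obtain ⟨s, hs⟩ := Submodule.mem_span_singleton.mp h
    have hg0 : g = 0 := by
      have := congrArg (· * g) hs
      simpa [mul_assoc, sub_mul, add_mul, heg, hgg] using this.symm
    rw [← hyg, hg0, mul_zero]

theorem exists_idempotent_generator {R : Type*} [Ring R]
    (hreg : ∀ a : R, ∃ b : R, a = a * b * a)
    (hdcc : ∀ a : ℕ → R, ∃ n : ℕ, ∀ m : ℕ, n ≤ m →
      Submodule.span R {chainProd a m} = Submodule.span R {chainProd a n})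
    (I : Submodule R R) : ∃ e ∈ I, ∀ x ∈ I, x * e = x := by
  by_contra! hI
  have hnext (e : {e : R // e ∈ I ∧ e * e = e}) : ∃ e' : {e : R // e ∈ I ∧ e * e = e},
      e'.1 * e.1 = e.1 ∧ 1 - e.1 ∉ Submodule.span R {1 - e'.1} := by
    obtain ⟨x, hx, hxe⟩ := hI e.1 e.2.1
    obtain ⟨e', h1, h2, h3⟩ := exists_larger_idempotent hreg I e.2.1 e.2.2 hx hxe
    exact ⟨⟨e', h1, h2⟩, h3⟩
  choose next hmul hnot using hnext
  let E : ℕ → {e : R // e ∈ I ∧ e * e = e} :=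
    fun n => Nat.rec ⟨0, I.zero_mem, mul_zero 0⟩ (fun _ e => next e) n
  have hE (n : ℕ) : E (n + 1) = next (E n) := rfl
  have hchain (n : ℕ) : chainProd (fun k => 1 - (E k).1) n = 1 - (E n).1 := by
    induction n with
    | zero => rfl
    | succ n ih =>
      rw [chainProd, ih, hE, mul_sub, sub_mul _ _ (E n).1, hmul]
      simp
  obtain ⟨n, hn⟩ := hdcc fun k => 1 - (E k).1
  have h := hn (n + 1) n.le_succ
  rw [hchain, hchain, hE] at h
  exact hnot (E n) (h ▸ Submodule.mem_span_singleton_self _)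

theorem isSemisimpleRing_of_idempotent_generators {R : Type*} [Ring R]
    (h : ∀ I : Submodule R R, ∃ e ∈ I, ∀ x ∈ I, x * e = x) : IsSemisimpleRing R := by
  refine (isSemisimpleModule_iff R R).mpr ⟨fun I => ?_⟩
  obtain ⟨e, he, hx⟩ := h I
  refine ⟨Submodule.span R {1 - e}, ?_, ?_⟩
  · rw [Submodule.disjoint_def]
    intro x hxI hxs
    obtain ⟨s, rfl⟩ := Submodule.mem_span_singleton.mp hxs
    rw [← hx _ hxI, smul_eq_mul, mul_assoc, sub_mul, hx e he, one_mul, sub_self, mul_zero]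
  · rw [codisjoint_iff, Ideal.eq_top_iff_one, Submodule.mem_sup]
    exact ⟨e, he, 1 - e, Submodule.mem_span_singleton_self _, by abel⟩

/-- If `R` is von Neumann regular and the free right `R`-module `R^(ℕ)` is C2,
then `R` has DCC on principal left ideals (so `R` is right perfect), and hence
`R` is semisimple. -/
theorem stmt18 {R : Type*} [Ring R]
    (hreg : ∀ a : R, ∃ b : R, a = a * b * a)
    (hC2 : ∀ K L : Submodule Rᵐᵒᵖ (ℕ →₀ R), IsSummand L →
      Nonempty (K ≃ₗ[Rᵐᵒᵖ] L) → IsSummand K) :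
    (∀ a : ℕ → R, ∃ n : ℕ, ∀ m : ℕ, n ≤ m →
      Submodule.span R {chainProd a m} = Submodule.span R {chainProd a n}) ∧
    IsSemisimpleRing R := by
  have hdcc : ∀ a : ℕ → R, ∃ n : ℕ, ∀ m : ℕ, n ≤ m →
      Submodule.span R {chainProd a m} = Submodule.span R {chainProd a n} := by
    intro a
    have hsummand : IsSummand (LinearMap.range (bassMap a)) :=
      hC2 _ ⊤ ⟨⊥, isCompl_top_bot⟩
        ⟨(LinearEquiv.ofInjective _ (bassMap_injective a)).symm.trans
          Submodule.topEquiv.symm⟩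
    obtain ⟨r, hr⟩ :=
      exists_leftInverse_of_isSummand_range _ (bassMap_injective a) hsummand
    obtain ⟨n, hn⟩ := exists_chainProd_mem_span_succ a r hr
    exact ⟨n, span_chainProd_eq_of_le a n hn⟩
  exact ⟨hdcc, isSemisimpleRing_of_idempotent_generators
    (exists_idempotent_generator hreg hdcc)⟩
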